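/- arXiv:1701.08791 — 6 statements merged into one kernel-verified Lean document; each statement's English description precedes it below -/
import Mathlib

section
/- For all real numbers x ≥ 0, y ≥ 0 and 𝖨 ≥ 0, the following two integral representations of the channel kernel coincide: ∫_{−π}^{π} exp(−(y + x + 𝖨 − 2√(yx)·cos θ)) · I₀(2·√(𝖨·(y + x − 2√(yx)·cos θ))) dθ = ∫_{−π}^{π} exp(−(y + x + 𝖨 + 2√(x𝖨)·cos θ)) · I₀(2·√(y·(x + 𝖨 + 2√(x𝖨)·cos θ))) dθ. -/
/-!
Write `a = √x`, `b = √y`, `c = √I`. Both sides equal `1 / (2π)` times the double integral over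
`(θ, φ)` of the Gaussian weight `exp (-|b e^{iθ} - a - c e^{iφ}|²)`. For any real `p`, `q`, a
phase shift and periodicity give `∫ exp (p cos t + q sin t) dt = 2π I₀ (√(p² + q²))` over a period
(`besselI0_sqrt`). The left side arises by integrating out `φ` first, the right side by
integrating out `θ` first, so the identity is Fubini's theorem.
-/

open MeasureTheory Real Filter Topology

noncomputable def besselI0 (r : ℝ) : ℝ :=
  (1 / (2 * π)) * ∫ t in (0:ℝ)..(2 * π), Real.exp (r * Real.cos t)

noncomputable def K (I x y : ℝ) : ℝ :=
  (1 / (2 * π)) * ∫ θ in (-π)..π,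
    Real.exp (-(y + x + I - 2 * Real.sqrt (y * x) * Real.cos θ)) *
      besselI0 (2 * Real.sqrt (I * (y + x - 2 * Real.sqrt (y * x) * Real.cos θ)))

noncomputable def outDen (I : ℝ) (F : Measure ℝ) (y : ℝ) : ℝ :=
  ∫ x, K I x y ∂F

noncomputable def outEnt (I : ℝ) (F : Measure ℝ) : ℝ :=
  -∫ y in Set.Ioi (0:ℝ), outDen I F y * Real.log (outDen I F y)

noncomputable def margEnt (I : ℝ) (F : Measure ℝ) (x : ℝ) : ℝ :=
  -∫ y in Set.Ioi (0:ℝ), K I x y * Real.log (outDen I F y)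


/-- `I₀ (√(p² + q²))` as the average of `exp (p cos t + q sin t)` over a period. -/
lemma besselI0_sqrt (p q : ℝ) :
    besselI0 (Real.sqrt (p ^ 2 + q ^ 2)) =
      (1 / (2 * π)) * ∫ t in (-π)..π, Real.exp (p * Real.cos t + q * Real.sin t) := by
  obtain ⟨r, α, hr, hp, hq⟩ : ∃ r α : ℝ, Real.sqrt (p ^ 2 + q ^ 2) = r ∧
      p = r * Real.cos α ∧ q = r * Real.sin α := by
    refine ⟨‖(⟨p, q⟩ : ℂ)‖, Complex.arg ⟨p, q⟩, ?_, ?_, ?_⟩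
    · rw [Complex.norm_eq_sqrt_sq_add_sq]
    · rw [Complex.norm_mul_cos_arg]
    · rw [Complex.norm_mul_sin_arg]
  have hper : Function.Periodic (fun t => Real.exp (r * Real.cos t)) (2 * π) := by
    intro t
    simp only [Real.cos_add_two_pi]
  have h : ∀ t, Real.exp (p * Real.cos t + q * Real.sin t) =
      (fun t => Real.exp (r * Real.cos t)) (t - α) := by
    intro t
    simp only [hp, hq, Real.cos_sub]
    ring_nf
  simp_rw [h]
  rw [intervalIntegral.integral_comp_sub_right (fun t => Real.exp (r * Real.cos t)), hr, besselI0]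
  have := hper.intervalIntegral_add_eq (-π - α) 0
  rw [show -π - α + 2 * π = π - α by ring, zero_add] at this
  rw [this]

theorem stmt_1 (x y I : ℝ) (hx : 0 ≤ x) (hy : 0 ≤ y) (hI : 0 ≤ I) :
    (∫ θ in (-π)..π,
        Real.exp (-(y + x + I - 2 * Real.sqrt (y * x) * Real.cos θ)) *
          besselI0 (2 * Real.sqrt (I * (y + x - 2 * Real.sqrt (y * x) * Real.cos θ))))
    = ∫ θ in (-π)..π,
        Real.exp (-(y + x + I + 2 * Real.sqrt (x * I) * Real.cos θ)) *
          besselI0 (2 * Real.sqrt (y * (x + I + 2 * Real.sqrt (x * I) * Real.cos θ))) := by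
  obtain ⟨a, ha, rfl⟩ : ∃ a : ℝ, 0 ≤ a ∧ a ^ 2 = x := ⟨√x, Real.sqrt_nonneg x, Real.sq_sqrt hx⟩
  obtain ⟨b, hb, rfl⟩ : ∃ b : ℝ, 0 ≤ b ∧ b ^ 2 = y := ⟨√y, Real.sqrt_nonneg y, Real.sq_sqrt hy⟩
  obtain ⟨c, hc, rfl⟩ : ∃ c : ℝ, 0 ≤ c ∧ c ^ 2 = I := ⟨√I, Real.sqrt_nonneg I, Real.sq_sqrt hI⟩
  have hba : Real.sqrt (b ^ 2 * a ^ 2) = b * a := by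
    rw [← mul_pow, Real.sqrt_sq (by positivity)]
  have hac : Real.sqrt (a ^ 2 * c ^ 2) = a * c := by
    rw [← mul_pow, Real.sqrt_sq (by positivity)]
  have htwo : ∀ z : ℝ, 2 * Real.sqrt z = Real.sqrt (4 * z) := by
    intro z
    rw [Real.sqrt_mul (by norm_num), show (4 : ℝ) = 2 ^ 2 by norm_num,
      Real.sqrt_sq (by norm_num)]
  -- `F θ φ = exp (-|b e^{iθ} - a - c e^{iφ}|²)`
  let F : ℝ → ℝ → ℝ := fun θ φ => Real.exp (-(a ^ 2 + b ^ 2 + c ^ 2) + 2 * a * b * Real.cos θ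
    - 2 * a * c * Real.cos φ + 2 * b * c * (Real.cos θ * Real.cos φ + Real.sin θ * Real.sin φ))
  have hL : ∀ θ, Real.exp (-(b ^ 2 + a ^ 2 + c ^ 2 - 2 * (b * a) * Real.cos θ)) *
      besselI0 (2 * Real.sqrt (c ^ 2 * (b ^ 2 + a ^ 2 - 2 * (b * a) * Real.cos θ))) =
      (1 / (2 * π)) * ∫ φ in (-π)..π, F θ φ := by
    intro θ
    rw [htwo, show 4 * (c ^ 2 * (b ^ 2 + a ^ 2 - 2 * (b * a) * Real.cos θ)) =
      (2 * c * (b * Real.cos θ - a)) ^ 2 + (2 * c * (b * Real.sin θ)) ^ 2 by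
        linear_combination (-4 * c ^ 2 * b ^ 2) * Real.sin_sq_add_cos_sq θ,
      besselI0_sqrt, mul_left_comm, ← intervalIntegral.integral_const_mul]
    congr 2
    ext φ
    rw [← Real.exp_add]
    simp only [F]
    ring_nf
  have hR : ∀ φ, Real.exp (-(b ^ 2 + a ^ 2 + c ^ 2 + 2 * (a * c) * Real.cos φ)) *
      besselI0 (2 * Real.sqrt (b ^ 2 * (a ^ 2 + c ^ 2 + 2 * (a * c) * Real.cos φ))) =
      (1 / (2 * π)) * ∫ θ in (-π)..π, F θ φ := by
    intro φ
    rw [htwo, show 4 * (b ^ 2 * (a ^ 2 + c ^ 2 + 2 * (a * c) * Real.cos φ)) =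
      (2 * b * (a + c * Real.cos φ)) ^ 2 + (2 * b * (c * Real.sin φ)) ^ 2 by
        linear_combination (-4 * c ^ 2 * b ^ 2) * Real.sin_sq_add_cos_sq φ,
      besselI0_sqrt, mul_left_comm, ← intervalIntegral.integral_const_mul]
    congr 2
    ext θ
    rw [← Real.exp_add]
    simp only [F]
    ring_nf
  simp_rw [hba, hac, hL, hR, intervalIntegral.integral_const_mul]
  congr 1
  apply intervalIntegral_intervalIntegral_swap
  have hF : Continuous (Function.uncurry F) := by
    simp only [F, Function.uncurry_def]
    fun_prop
  exact (hF.continuousOn.integrableOn_compact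
    (isCompact_uIcc.prod isCompact_uIcc)).mono_set
    (Set.prod_mono Set.uIoc_subset_uIcc Set.uIoc_subset_uIcc)
end

section
/- For every x ≥ 0 and 𝖨 ≥ 0, the kernel K(x,·) is a probability density on [0,∞) with mean x + 𝖨 + 1; that is, ∫₀^∞ K(x,y) dy = 1 and ∫₀^∞ y · K(x,y) dy = x + 𝖨 + 1. -/
/-!
The kernel is the law of `‖√x + √I e^{it} + Z‖²`, where `t` is uniform on `[0, 2π]` and `Z` is a
complex Gaussian with density `exp (-‖z‖²) / π`. Indeed, by periodicity,
`exp (-(‖z‖² + I)) * I₀ (2 √I ‖z‖)` is the average over `t` of `exp (-‖z - √I e^{it}‖²)`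
(`exp_mul_besselI0`), and `y + x - 2 √(yx) cos θ = ‖√y e^{iθ} - √x‖²`. So `K I x y` is the average
over `θ` of a function on `ℂ` evaluated at `√y e^{iθ}` (`K_eq`), and integrating over `y` is
integration over the plane in polar coordinates with `y = r²` (`integral_sqrt_polar`). By
Fubini (`integrable_and_integral_avg`), both claims reduce to the zeroth and second moments of a
shifted Gaussian on `ℂ`: `∫ exp (-‖w - a‖²) = π` and `∫ ‖w‖² exp (-‖w - a‖²) = π (‖a‖² + 1)`,
with `a = √x + √I e^{it}`; the cross term of `‖a‖²` averages to zero over `t`.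
-/

open MeasureTheory Real Filter Topology

/-- The point `e^{it}` of the unit circle, in the form used by `Complex.polarCoord`. -/
noncomputable def unitPt (t : ℝ) : ℂ := (Real.cos t : ℂ) + Real.sin t * Complex.I

lemma continuous_unitPt : Continuous unitPt := by
  unfold unitPt; fun_prop

/-! ### Gaussian moments on the plane -/

lemma gauss_zero : Integrable (fun z : ℂ => Real.exp (-‖z‖ ^ 2)) ∧
    ∫ z : ℂ, Real.exp (-‖z‖ ^ 2) = π := by
  have h : ∫ z : ℂ, Real.exp (-‖z‖ ^ 2) = π := by
    have := Complex.integral_exp_neg_rpow (p := 2) (by norm_num)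
    norm_num at this
    simpa using this
  -- A nonzero Bochner integral forces integrability.
  exact ⟨Integrable.of_integral_ne_zero (by rw [h]; exact Real.pi_ne_zero), h⟩

lemma gauss_two : Integrable (fun z : ℂ => ‖z‖ ^ 2 * Real.exp (-‖z‖ ^ 2)) ∧
    ∫ z : ℂ, ‖z‖ ^ 2 * Real.exp (-‖z‖ ^ 2) = π := by
  have h : ∫ z : ℂ, ‖z‖ ^ 2 * Real.exp (-‖z‖ ^ 2) = π := by
    have := Complex.integral_rpow_mul_exp_neg_rpow (p := 2) (q := 2) (by norm_num) (by norm_num)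
    norm_num at this
    simpa using this
  exact ⟨Integrable.of_integral_ne_zero (by rw [h]; exact Real.pi_ne_zero), h⟩

lemma gauss_shift_zero (a : ℂ) : Integrable (fun w : ℂ => Real.exp (-‖w - a‖ ^ 2)) ∧
    ∫ w : ℂ, Real.exp (-‖w - a‖ ^ 2) = π :=
  ⟨gauss_zero.1.comp_sub_right a,
    (integral_sub_right_eq_self (fun z : ℂ => Real.exp (-‖z‖ ^ 2)) a).trans gauss_zero.2⟩

lemma gauss_shift_two (a : ℂ) :
    Integrable (fun w : ℂ => ‖w‖ ^ 2 * Real.exp (-‖w - a‖ ^ 2)) ∧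
    ∫ w : ℂ, ‖w‖ ^ 2 * Real.exp (-‖w - a‖ ^ 2) = π * (‖a‖ ^ 2 + 1) := by
  set f : ℂ → ℝ := fun z => ‖z + a‖ ^ 2 * Real.exp (-‖z‖ ^ 2) with hf
  have hshift : (fun w : ℂ => ‖w‖ ^ 2 * Real.exp (-‖w - a‖ ^ 2)) = fun w => f (w - a) := by
    funext w; simp [hf]
  have hpar (z : ℂ) : f z + f (-z) =
      2 * (‖z‖ ^ 2 * Real.exp (-‖z‖ ^ 2)) + 2 * ‖a‖ ^ 2 * Real.exp (-‖z‖ ^ 2) := by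
    have := parallelogram_law_with_norm ℝ a z
    have h2 : ‖-z + a‖ = ‖a - z‖ := by congr 1; ring
    have h3 : ‖z + a‖ = ‖a + z‖ := by congr 1; ring
    simp only [hf, norm_neg, h2, h3]
    linear_combination Real.exp (-‖z‖ ^ 2) * this
  have hsum : Integrable (fun z : ℂ =>
      2 * (‖z‖ ^ 2 * Real.exp (-‖z‖ ^ 2)) + 2 * ‖a‖ ^ 2 * Real.exp (-‖z‖ ^ 2)) :=
    (gauss_two.1.const_mul 2).add (gauss_zero.1.const_mul _)
  have hfi : Integrable f := by
    refine hsum.mono' (by rw [hf]; fun_prop) (ae_of_all _ fun z => ?_)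
    rw [← hpar z, Real.norm_of_nonneg (by simp only [hf]; positivity)]
    have : 0 ≤ f (-z) := by simp only [hf]; positivity
    linarith
  have hfv : ∫ z, f z = π * (‖a‖ ^ 2 + 1) := by
    -- Averaging `f z` and `f (-z)` removes the term linear in `z`.
    have h1 : ∫ z, (f z + f (-z)) = 2 * ∫ z, f z := by
      rw [integral_add hfi hfi.comp_neg, integral_neg_eq_self]; ring
    have h2 : ∫ z, (f z + f (-z)) = 2 * π + 2 * ‖a‖ ^ 2 * π := by
      simp_rw [hpar]
      rw [integral_add (gauss_two.1.const_mul 2) (gauss_zero.1.const_mul _),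
        integral_const_mul, integral_const_mul, gauss_two.2, gauss_zero.2]
    linarith
  rw [hshift]
  exact ⟨hfi.comp_sub_right a, (integral_sub_right_eq_self f a).trans hfv⟩

/-! ### Polar coordinates and Fubini -/

/-- Integration over the plane in polar coordinates, with radius `√y`. -/
lemma integral_sqrt_polar (h : ℂ → ℝ) (hc : Continuous h) (hi : Integrable h) :
    ∫ y in Set.Ioi (0:ℝ), ∫ θ in (-π)..π, h (Real.sqrt y * unitPt θ) = 2 * ∫ w, h w := by
  have hs : MeasurableSet (Set.Ioi (0 : ℝ) ×ˢ Set.Ioo (-π) π) :=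
    measurableSet_Ioi.prod measurableSet_Ioo
  have hint : IntegrableOn (fun p : ℝ × ℝ => p.1 * h (p.1 * unitPt p.2))
      (Set.Ioi (0 : ℝ) ×ˢ Set.Ioo (-π) π) (volume.prod volume) := by
    refine ⟨?_, ?_⟩
    · have := continuous_unitPt
      exact Continuous.aestronglyMeasurable (by fun_prop)
    · have h1 := Complex.lintegral_comp_polarCoord_symm (fun w => ‖h w‖ₑ)
      have h2 := hi.2
      rw [HasFiniteIntegral, ← h1] at h2
      refine lt_of_eq_of_lt ?_ h2
      refine setLIntegral_congr_fun hs fun p hp => ?_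
      have hp0 : (0:ℝ) < p.1 := hp.1
      simp only [enorm_mul, smul_eq_mul, Complex.polarCoord_symm_apply, unitPt]
      rw [Real.enorm_of_nonneg hp0.le]
  have hpol : ∫ w, h w = ∫ r in Set.Ioi (0:ℝ), ∫ θ in Set.Ioo (-π) π, r * h (r * unitPt θ) := by
    rw [← Complex.integral_comp_polarCoord_symm, ← setIntegral_prod _ hint]
    simp only [smul_eq_mul, Complex.polarCoord_symm_apply, unitPt]
    rfl
  rw [hpol, ← integral_comp_rpow_Ioi_of_pos (p := 2) (by norm_num), ← integral_const_mul]
  refine setIntegral_congr_fun measurableSet_Ioi fun r hr => ?_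
  have hr0 : (0:ℝ) < r := hr
  have hle : -π ≤ π := by linarith [Real.pi_pos]
  simp only [Real.rpow_two, Real.sqrt_sq hr0.le, smul_eq_mul]
  rw [intervalIntegral.integral_of_le hle, ← integral_Ioc_eq_integral_Ioo, integral_const_mul]
  norm_num
  ring

/-- Tonelli for a nonnegative continuous integrand whose `w`-integral `m t` is continuous in `t`. -/
lemma integrable_and_integral_avg (F : ℂ → ℝ → ℝ) (hF : Continuous (Function.uncurry F))
    (h0 : ∀ w t, 0 ≤ F w t) (m : ℝ → ℝ) (hm : Continuous m)
    (hi : ∀ t, Integrable (fun w => F w t)) (hv : ∀ t, ∫ w, F w t = m t) :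
    Integrable (fun w => ∫ t in (0:ℝ)..(2 * π), F w t) ∧
    ∫ w, (∫ t in (0:ℝ)..(2 * π), F w t) = ∫ t in (0:ℝ)..(2 * π), m t := by
  have hle : (0:ℝ) ≤ 2 * π := by positivity
  simp only [intervalIntegral.integral_of_le hle]
  have hprod : Integrable (Function.uncurry F)
      ((volume : Measure ℂ).prod (volume.restrict (Set.Ioc (0:ℝ) (2 * π)))) := by
    rw [integrable_prod_iff' hF.aestronglyMeasurable]
    refine ⟨ae_of_all _ hi, ?_⟩
    have : (fun t => ∫ w, ‖Function.uncurry F (w, t)‖) = m := by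
      funext t
      rw [← hv t]
      simp [Function.uncurry, abs_of_nonneg (h0 _ _)]
    rw [this]
    exact (hm.integrableOn_Icc).mono_set Set.Ioc_subset_Icc_self
  refine ⟨hprod.integral_prod_left, ?_⟩
  rw [integral_integral_swap hprod]
  simp_rw [hv]

/-! ### The kernel as a mixture of Gaussians -/

lemma norm_sub_mul_unitPt_sq (z : ℂ) (s t : ℝ) :
    ‖z - s * unitPt t‖ ^ 2 = ‖z‖ ^ 2 + s ^ 2 - 2 * s * ‖z‖ * Real.cos (t - z.arg) := by
  have h1 := Complex.norm_mul_cos_arg z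
  have h2 := Complex.norm_mul_sin_arg z
  rw [Real.cos_sub, Complex.sq_norm, Complex.normSq_apply, Complex.sq_norm, Complex.normSq_apply]
  simp only [unitPt, Complex.sub_re, Complex.sub_im, Complex.mul_re, Complex.mul_im,
    Complex.add_re, Complex.add_im, Complex.ofReal_re, Complex.ofReal_im, Complex.I_re,
    Complex.I_im]
  linear_combination (2 * s * Real.cos t) * h1 + 2 * s * Real.sin t * h2 +
    s ^ 2 * Real.sin_sq_add_cos_sq t

lemma exp_mul_besselI0 (I : ℝ) (hI : 0 ≤ I) (z : ℂ) :
    Real.exp (-(‖z‖ ^ 2 + I)) * besselI0 (2 * (Real.sqrt I * ‖z‖)) =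
      (1 / (2 * π)) * ∫ t in (0:ℝ)..(2 * π), Real.exp (-‖z - Real.sqrt I * unitPt t‖ ^ 2) := by
  set g : ℝ → ℝ := fun t => Real.exp (2 * (Real.sqrt I * ‖z‖) * Real.cos t) with hg
  have hper : Function.Periodic g (2 * π) := fun t => by simp [hg]
  have hshift : ∫ t in (0:ℝ)..(2 * π), g (t - z.arg) = ∫ t in (0:ℝ)..(2 * π), g t := by
    rw [intervalIntegral.integral_comp_sub_right]
    have := hper.intervalIntegral_add_eq (0 - z.arg) 0
    rw [zero_add] at this
    rw [← this]
    congr 1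
    ring
  have hpt (t : ℝ) : Real.exp (-‖z - Real.sqrt I * unitPt t‖ ^ 2) =
      Real.exp (-(‖z‖ ^ 2 + I)) * g (t - z.arg) := by
    rw [norm_sub_mul_unitPt_sq, Real.sq_sqrt hI, hg, ← Real.exp_add]
    congr 1
    ring
  simp_rw [hpt]
  rw [intervalIntegral.integral_const_mul, hshift, besselI0]
  ring

lemma norm_sq_sqrt_mul_unitPt (y θ : ℝ) (hy : 0 ≤ y) : ‖Real.sqrt y * unitPt θ‖ ^ 2 = y := by
  have := norm_sub_mul_unitPt_sq 0 (Real.sqrt y) θ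
  simpa [Real.sq_sqrt hy] using this

lemma norm_sq_sqrt_mul_unitPt_sub (x y θ : ℝ) (hx : 0 ≤ x) (hy : 0 ≤ y) :
    ‖Real.sqrt y * unitPt θ - Real.sqrt x‖ ^ 2 = y + x - 2 * Real.sqrt (y * x) * Real.cos θ := by
  have := norm_sub_mul_unitPt_sq (Real.sqrt x) (Real.sqrt y) θ
  rw [norm_sub_rev, this, Complex.arg_ofReal_of_nonneg (Real.sqrt_nonneg x), Real.sqrt_mul hy,
    Complex.norm_of_nonneg (Real.sqrt_nonneg x), Real.sq_sqrt hx, Real.sq_sqrt hy, sub_zero]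
  ring

lemma K_eq (I x y : ℝ) (hI : 0 ≤ I) (hx : 0 ≤ x) (hy : 0 ≤ y) :
    K I x y = (1 / (2 * π)) * ∫ θ in (-π)..π, (1 / (2 * π)) * ∫ t in (0:ℝ)..(2 * π),
      Real.exp (-‖Real.sqrt y * unitPt θ - (Real.sqrt x + Real.sqrt I * unitPt t)‖ ^ 2) := by
  rw [K]
  congr 1
  refine intervalIntegral.integral_congr fun θ _ => ?_
  have h := exp_mul_besselI0 I hI (Real.sqrt y * unitPt θ - Real.sqrt x)
  simp only [sub_sub] at h
  have hn := norm_sq_sqrt_mul_unitPt_sub x y θ hx hy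
  rw [← h, ← hn, Real.sqrt_mul hI, Real.sqrt_sq (norm_nonneg _), hn]
  congr 2
  ring

/-- Moments of the kernel as averages of the Gaussian moments `M a` centred at `a`. -/
lemma moment_K (I x : ℝ) (hI : 0 ≤ I) (hx : 0 ≤ x) (k : ℕ) (M : ℂ → ℝ) (hM : Continuous M)
    (h : ∀ a : ℂ, Integrable (fun w : ℂ => (‖w‖ ^ 2) ^ k * Real.exp (-‖w - a‖ ^ 2)) ∧
      ∫ w : ℂ, (‖w‖ ^ 2) ^ k * Real.exp (-‖w - a‖ ^ 2) = M a) :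
    ∫ y in Set.Ioi (0:ℝ), y ^ k * K I x y =
      (1 / (2 * π ^ 2)) * ∫ t in (0:ℝ)..(2 * π), M (Real.sqrt x + Real.sqrt I * unitPt t) := by
  have hu := continuous_unitPt
  set F : ℂ → ℝ → ℝ := fun w t =>
    (‖w‖ ^ 2) ^ k * Real.exp (-‖w - (Real.sqrt x + Real.sqrt I * unitPt t)‖ ^ 2) with hF
  have hFc : Continuous (Function.uncurry F) := by
    simp only [hF, Function.uncurry_def]; fun_prop
  obtain ⟨hi, hv⟩ := integrable_and_integral_avg F hFc (fun w t => by simp only [hF]; positivity)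
    (fun t => M (Real.sqrt x + Real.sqrt I * unitPt t)) (by fun_prop)
    (fun t => (h _).1) (fun t => (h _).2)
  have hc : Continuous (fun w => ∫ t in (0:ℝ)..(2 * π), F w t) :=
    intervalIntegral.continuous_parametric_intervalIntegral_of_continuous' hFc _ _
  have hp := integral_sqrt_polar _ hc hi
  rw [hv] at hp
  have hK : ∫ y in Set.Ioi (0:ℝ), y ^ k * K I x y = ∫ y in Set.Ioi (0:ℝ),
      (1 / (2 * π)) ^ 2 * ∫ θ in (-π)..π, ∫ t in (0:ℝ)..(2 * π), F (Real.sqrt y * unitPt θ) t := by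
    refine setIntegral_congr_fun measurableSet_Ioi fun y hy => ?_
    have hy0 : (0:ℝ) ≤ y := le_of_lt hy
    simp only [hF, norm_sq_sqrt_mul_unitPt y _ hy0, K_eq I x y hI hx hy0,
      intervalIntegral.integral_const_mul]
    ring
  rw [hK, integral_const_mul, hp]
  field_simp

theorem stmt_2 (I x : ℝ) (hI : 0 ≤ I) (hx : 0 ≤ x) :
    (∫ y in Set.Ioi (0:ℝ), K I x y) = 1 ∧
    (∫ y in Set.Ioi (0:ℝ), y * K I x y) = x + I + 1 := by
  have hpi := Real.pi_ne_zero
  constructor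
  · have h := moment_K I x hI hx 0 (fun _ => π) continuous_const
      (fun a => by simpa using gauss_shift_zero a)
    simp only [pow_zero, one_mul, intervalIntegral.integral_const, smul_eq_mul, sub_zero] at h
    rw [h]
    field_simp
  · have h := moment_K I x hI hx 1 (fun a => π * (‖a‖ ^ 2 + 1)) (by fun_prop)
      (fun a => by simpa using gauss_shift_two a)
    simp only [pow_one] at h
    have hn (t : ℝ) : ‖(Real.sqrt x + Real.sqrt I * unitPt t : ℂ)‖ ^ 2 =
        x + I + 2 * Real.sqrt I * Real.sqrt x * Real.cos t := by
      have h1 := norm_sub_mul_unitPt_sq (Real.sqrt x) (-Real.sqrt I) t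
      rw [Complex.arg_ofReal_of_nonneg (Real.sqrt_nonneg x),
        Complex.norm_of_nonneg (Real.sqrt_nonneg x), neg_sq, Real.sq_sqrt hx, Real.sq_sqrt hI,
        sub_zero, Complex.ofReal_neg, neg_mul, sub_neg_eq_add] at h1
      rw [h1]
      ring
    have hint : ∫ t in (0:ℝ)..(2 * π), π * (x + I + 2 * Real.sqrt I * Real.sqrt x * Real.cos t + 1)
        = 2 * π ^ 2 * (x + I + 1) := by
      have : (fun t : ℝ => π * (x + I + 2 * Real.sqrt I * Real.sqrt x * Real.cos t + 1)) =
          fun t => π * (x + I + 1) + (π * (2 * Real.sqrt I * Real.sqrt x)) * Real.cos t := by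
        funext t; ring
      rw [this, intervalIntegral.integral_add (by simp)
        (Continuous.intervalIntegrable (by fun_prop) _ _), intervalIntegral.integral_const,
        intervalIntegral.integral_const_mul, integral_cos]
      simp
      ring
    rw [h]
    simp_rw [hn]
    rw [hint]
    field_simp
end

section
/- Let F be a probability measure on [0,∞) with ∫₀^∞ x dF(x) ≤ 𝖲, and set β_F := −ln( ∫₀^∞ e^{−x} dF(x) ). Then the output density f(y;F) := ∫₀^∞ K(x,y) dF(x) satisfies e^{−(y + 𝖨 + β_F)} ≤ f(y;F) ≤ 1 for all y ≥ 0. -/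
/-!
Write `ρ² = y + x - 2√(yx) cos θ`, which is nonnegative for `x, y ≥ 0`. The elementary bounds
`1 ≤ I₀(r) ≤ eʳ` (`r ≥ 0`) control the kernel pointwise.

Upper bound: the integrand of `K` is at most `exp(-(ρ² + I) + 2√I ρ) = exp(-(ρ - √I)²) ≤ 1`, so
its angular average `K` is at most `1` (`K_le_one`), and so is the average of `K` under `F`.

Lower bound: since `I₀ ≥ 1` and `eᵘ ≥ 1 + u`, the integrand is at least
`exp(-(y + x + I)) (1 + 2√(yx) cos θ)`, and the cosine averages to zero. Hence
`K ≥ exp(-(y + x + I))` (`exp_le_K`), and integrating against `F` gives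
`exp(-(y + I)) ∫ exp(-x) dF`, the claimed bound. Continuity of `K` in `x` supplies the
measurability needed to integrate.
-/

open MeasureTheory Real Filter Topology

lemma one_le_besselI0 (r : ℝ) : 1 ≤ besselI0 r := by
  have hpi := Real.pi_pos
  have h : ∫ t in (0:ℝ)..(2 * π), (1 + r * Real.cos t)
      ≤ ∫ t in (0:ℝ)..(2 * π), Real.exp (r * Real.cos t) := by
    apply intervalIntegral.integral_mono_on (by positivity)
    · exact Continuous.intervalIntegrable (by fun_prop) _ _
    · exact Continuous.intervalIntegrable (by fun_prop) _ _
    · intro t _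
      linarith [Real.add_one_le_exp (r * Real.cos t)]
  have h2 : ∫ t in (0:ℝ)..(2 * π), (1 + r * Real.cos t) = 2 * π := by
    rw [intervalIntegral.integral_add
      (Continuous.intervalIntegrable (by fun_prop) _ _)
      (Continuous.intervalIntegrable (by fun_prop) _ _)]
    simp
  rw [h2] at h
  unfold besselI0
  rw [one_div, inv_mul_eq_div, le_div_iff₀ (by positivity)]
  linarith

lemma besselI0_le_exp {r : ℝ} (hr : 0 ≤ r) : besselI0 r ≤ Real.exp r := by
  have hpi := Real.pi_pos
  have h : ∫ t in (0:ℝ)..(2 * π), Real.exp (r * Real.cos t)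
      ≤ ∫ _ in (0:ℝ)..(2 * π), Real.exp r := by
    apply intervalIntegral.integral_mono_on (by positivity)
    · exact Continuous.intervalIntegrable (by fun_prop) _ _
    · exact Continuous.intervalIntegrable (by fun_prop) _ _
    · intro t _
      exact Real.exp_le_exp.2 (mul_le_of_le_one_right hr (Real.cos_le_one t))
  simp only [intervalIntegral.integral_const, smul_eq_mul, sub_zero] at h
  unfold besselI0
  rw [one_div, inv_mul_eq_div, div_le_iff₀ (by positivity)]
  linarith

@[fun_prop]
lemma continuous_besselI0 : Continuous besselI0 := by
  unfold besselI0
  refine continuous_const.mul ?_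
  exact intervalIntegral.continuous_parametric_intervalIntegral_of_continuous' (by fun_prop) _ _

lemma continuous_K (I y : ℝ) : Continuous fun x => K I x y := by
  unfold K
  refine continuous_const.mul ?_
  exact intervalIntegral.continuous_parametric_intervalIntegral_of_continuous'
    (f := fun x θ => Real.exp (-(y + x + I - 2 * Real.sqrt (y * x) * Real.cos θ)) *
      besselI0 (2 * Real.sqrt (I * (y + x - 2 * Real.sqrt (y * x) * Real.cos θ))))
    (by fun_prop) _ _

lemma K_le_one {I x y : ℝ} (hI : 0 ≤ I) (hx : 0 ≤ x) (hy : 0 ≤ y) : K I x y ≤ 1 := by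
  have hpi := Real.pi_pos
  have h : ∫ θ in (-π)..π, Real.exp (-(y + x + I - 2 * Real.sqrt (y * x) * Real.cos θ)) *
      besselI0 (2 * Real.sqrt (I * (y + x - 2 * Real.sqrt (y * x) * Real.cos θ)))
      ≤ ∫ _ in (-π)..π, (1:ℝ) := by
    apply intervalIntegral.integral_mono_on (by linarith)
    · exact Continuous.intervalIntegrable (by fun_prop) _ _
    · exact Continuous.intervalIntegrable (by fun_prop) _ _
    · intro θ _
      set q := y + x - 2 * Real.sqrt (y * x) * Real.cos θ with hq
      -- `q ≥ (√y - √x)²`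
      have hq0 : 0 ≤ q := by
        have h1 : Real.sqrt (y * x) * Real.cos θ ≤ Real.sqrt (y * x) :=
          mul_le_of_le_one_right (Real.sqrt_nonneg _) (Real.cos_le_one θ)
        rw [Real.sqrt_mul hy] at h1 hq
        nlinarith [sq_nonneg (Real.sqrt y - Real.sqrt x), Real.sq_sqrt hx, Real.sq_sqrt hy]
      calc _ ≤ Real.exp (-(y + x + I - 2 * Real.sqrt (y * x) * Real.cos θ)) *
            Real.exp (2 * Real.sqrt (I * q)) := by
              gcongr
              exact besselI0_le_exp (by positivity)
        _ = Real.exp (-(Real.sqrt q - Real.sqrt I) ^ 2) := by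
              rw [← Real.exp_add, Real.sqrt_mul hI]
              congr 1
              linear_combination -hq + Real.sq_sqrt hq0 + Real.sq_sqrt hI
        _ ≤ 1 := Real.exp_le_one_iff.2 (neg_nonpos.2 (sq_nonneg _))
  simp only [intervalIntegral.integral_const, smul_eq_mul] at h
  unfold K
  rw [one_div, inv_mul_eq_div, div_le_iff₀ (by positivity)]
  linarith

lemma exp_le_K (I x y : ℝ) : Real.exp (-(y + x + I)) ≤ K I x y := by
  have hpi := Real.pi_pos
  have h : ∫ θ in (-π)..π,
      Real.exp (-(y + x + I)) * (1 + 2 * Real.sqrt (y * x) * Real.cos θ) ≤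
      ∫ θ in (-π)..π, Real.exp (-(y + x + I - 2 * Real.sqrt (y * x) * Real.cos θ)) *
      besselI0 (2 * Real.sqrt (I * (y + x - 2 * Real.sqrt (y * x) * Real.cos θ))) := by
    apply intervalIntegral.integral_mono_on (by linarith)
    · exact Continuous.intervalIntegrable (by fun_prop) _ _
    · exact Continuous.intervalIntegrable (by fun_prop) _ _
    · intro θ _
      calc _ ≤ Real.exp (-(y + x + I)) * Real.exp (2 * Real.sqrt (y * x) * Real.cos θ) := by
              gcongr
              linarith [Real.add_one_le_exp (2 * Real.sqrt (y * x) * Real.cos θ)]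
        _ = Real.exp (-(y + x + I - 2 * Real.sqrt (y * x) * Real.cos θ)) := by
              rw [← Real.exp_add]
              congr 1
              ring
        _ ≤ _ := le_mul_of_one_le_right (Real.exp_pos _).le (one_le_besselI0 _)
  have h2 : ∫ θ in (-π)..π, (1 + 2 * Real.sqrt (y * x) * Real.cos θ) = 2 * π := by
    rw [intervalIntegral.integral_add
      (Continuous.intervalIntegrable (by fun_prop) _ _)
      (Continuous.intervalIntegrable (by fun_prop) _ _)]
    simp
    ring
  rw [intervalIntegral.integral_const_mul, h2] at h
  unfold K
  rw [one_div, inv_mul_eq_div, le_div_iff₀ (by positivity)]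
  exact h

theorem stmt_5 (S I : ℝ) (hS : 0 ≤ S) (hI : 0 ≤ I) (F : Measure ℝ) [IsProbabilityMeasure F]
    (hsupp : F (Set.Iio 0) = 0) (hmean : (∫ x, x ∂F) ≤ S) (y : ℝ) (hy : 0 ≤ y) :
    Real.exp (-(y + I + (-Real.log (∫ x, Real.exp (-x) ∂F)))) ≤ outDen I F y ∧
      outDen I F y ≤ 1 := by
  have hae : ∀ᵐ x ∂F, 0 ≤ x := by
    rw [ae_iff]
    simp only [not_le]
    exact hsupp
  have hKint : Integrable (fun x => K I x y) F := by
    refine Integrable.of_bound (continuous_K I y).aestronglyMeasurable 1 ?_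
    filter_upwards [hae] with x hx
    rw [Real.norm_eq_abs, abs_of_nonneg ((Real.exp_pos _).le.trans (exp_le_K I x y))]
    exact K_le_one hI hx hy
  have hEint : Integrable (fun x => Real.exp (-x)) F := by
    refine Integrable.of_bound (by fun_prop) 1 ?_
    filter_upwards [hae] with x hx
    rw [Real.norm_eq_abs, abs_of_pos (Real.exp_pos _)]
    exact Real.exp_le_one_iff.2 (neg_nonpos.2 hx)
  have hpos : 0 < ∫ x, Real.exp (-x) ∂F := integral_exp_pos hEint
  unfold outDen
  constructor
  · calc _ = Real.exp (-(y + I)) * ∫ x, Real.exp (-x) ∂F := by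
            rw [neg_add, neg_neg, Real.exp_add, Real.exp_log hpos]
      _ = ∫ x, Real.exp (-(y + I)) * Real.exp (-x) ∂F := (integral_const_mul _ _).symm
      _ ≤ ∫ x, K I x y ∂F := by
            refine integral_mono (hEint.const_mul _) hKint fun x => ?_
            refine le_trans (le_of_eq ?_) (exp_le_K I x y)
            simp only [← Real.exp_add]
            congr 1
            ring
  · calc ∫ x, K I x y ∂F ≤ ∫ _, (1:ℝ) ∂F := by
            refine integral_mono_ae hKint (integrable_const _) ?_
            filter_upwards [hae] with x hx using K_le_one hI hx hy
      _ = 1 := by simp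
end

section
/- Let F be a probability measure on [0,∞) and let y ≥ 16·𝖨 with y ≥ 0. Then ∫_{[0, (√y/4 − √𝖨)²]} K(x,y) dF(x) ≤ e^{−y/2}. -/
/-!
Put `R² = y + x - 2√(yx) cos θ`. Since `I₀(r) ≤ exp r` for `r ≥ 0`, the integrand of `K` is at most
`exp (-(R² + I - 2√I R)) = exp (-(R - √I)²)`. On the range of integration `√x ≤ √y/4 - √I`, hence
`R ≥ √y - √x ≥ 3√y/4 + √I`, so the integrand is at most `exp (-9y/16) ≤ exp (-y/2)`.
Averaging over `θ` and over the probability measure `F` preserves this bound. All integrals are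
estimated through norm bounds by constants, which hold without any integrability argument.
-/

open MeasureTheory Real Filter Topology

lemma abs_besselI0_le {r : ℝ} (hr : 0 ≤ r) : |besselI0 r| ≤ Real.exp r := by
  have h := intervalIntegral.norm_integral_le_of_norm_le_const (a := 0) (b := 2 * π)
    (f := fun t => Real.exp (r * Real.cos t)) (C := Real.exp r) (fun t _ => by
      rw [Real.norm_eq_abs, Real.abs_exp]
      exact Real.exp_le_exp.mpr (by nlinarith [Real.cos_le_one t]))
  have hπ := Real.pi_pos
  rw [Real.norm_eq_abs, sub_zero, abs_of_pos (by positivity : (0:ℝ) < 2 * π)] at h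
  unfold besselI0
  rw [abs_mul, abs_of_pos (by positivity : 0 < 1 / (2 * π))]
  calc 1 / (2 * π) * |∫ t in (0:ℝ)..(2 * π), Real.exp (r * Real.cos t)|
      ≤ 1 / (2 * π) * (Real.exp r * (2 * π)) := by gcongr
    _ = Real.exp r := by field_simp

lemma abs_K_le {I x y : ℝ} (hI : 0 ≤ I) (hx : 0 ≤ x) (hy : 0 ≤ y) (hyI : 16 * I ≤ y)
    (hxy : x ≤ (Real.sqrt y / 4 - Real.sqrt I) ^ 2) : |K I x y| ≤ Real.exp (-y / 2) := by
  have ha := Real.sqrt_nonneg I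
  have hb := Real.sqrt_nonneg x
  have hs := Real.sqrt_nonneg y
  have ha2 := Real.sq_sqrt hI
  have hb2 := Real.sq_sqrt hx
  have hs2 := Real.sq_sqrt hy
  have has : 4 * Real.sqrt I ≤ Real.sqrt y := by
    apply Real.le_sqrt_of_sq_le
    nlinarith
  have hbs : Real.sqrt x ≤ Real.sqrt y / 4 - Real.sqrt I :=
    Real.sqrt_le_iff.mpr ⟨by linarith, hxy⟩
  have h := intervalIntegral.norm_integral_le_of_norm_le_const (a := -π) (b := π)
    (f := fun θ => Real.exp (-(y + x + I - 2 * Real.sqrt (y * x) * Real.cos θ)) *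
      besselI0 (2 * Real.sqrt (I * (y + x - 2 * Real.sqrt (y * x) * Real.cos θ))))
    (C := Real.exp (-y / 2)) (fun θ _ => by
      rw [Real.norm_eq_abs, abs_mul, Real.abs_exp]
      refine (mul_le_mul_of_nonneg_left (abs_besselI0_le (by positivity))
        (Real.exp_pos _).le).trans ?_
      rw [← Real.exp_add, Real.exp_le_exp, Real.sqrt_mul hI, Real.sqrt_mul hy]
      set a := Real.sqrt I
      set b := Real.sqrt x
      set s := Real.sqrt y
      have hge : (s - b) ^ 2 ≤ y + x - 2 * (s * b) * Real.cos θ := by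
        nlinarith [Real.cos_le_one θ, mul_nonneg hs hb]
      have hR2 := Real.sq_sqrt ((sq_nonneg (s - b)).trans hge)
      have hR : s - b ≤ Real.sqrt (y + x - 2 * (s * b) * Real.cos θ) :=
        Real.le_sqrt_of_sq_le hge
      set R := Real.sqrt (y + x - 2 * (s * b) * Real.cos θ)
      have hRa : 3 / 4 * s ≤ R - a := by linarith
      have hsq : (3 / 4 * s) ^ 2 ≤ (R - a) ^ 2 := by gcongr
      nlinarith)
  have hπ := Real.pi_pos
  rw [Real.norm_eq_abs, abs_of_pos (by linarith : 0 < π - -π)] at h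
  unfold K
  rw [abs_mul, abs_of_pos (by positivity : 0 < 1 / (2 * π))]
  refine (mul_le_mul_of_nonneg_left h (by positivity)).trans_eq ?_
  field_simp
  ring

theorem stmt_8 (I : ℝ) (hI : 0 ≤ I) (F : Measure ℝ) [IsProbabilityMeasure F]
    (hsupp : F (Set.Iio 0) = 0) (y : ℝ) (hy : 0 ≤ y) (hyI : 16 * I ≤ y) :
    (∫ x in Set.Icc (0:ℝ) ((Real.sqrt y / 4 - Real.sqrt I)^2), K I x y ∂F)
      ≤ Real.exp (-y / 2) := by
  have h := norm_setIntegral_le_of_norm_le_const (μ := F)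
    (s := Set.Icc (0:ℝ) ((Real.sqrt y / 4 - Real.sqrt I)^2)) (f := fun x => K I x y)
    (C := Real.exp (-y / 2)) (measure_lt_top _ _)
    (fun x hx => abs_K_le hI hx.1 hy hyI hx.2)
  refine (le_abs_self _).trans (h.trans ?_)
  exact mul_le_of_le_one_right (Real.exp_pos _).le measureReal_le_one
end

section
/- First elliptic-integral asymptotic: for every fixed x ≥ 0, lim_{𝖨 → ∞} √𝖨 · ( (1/(2π)) ∫₀^{2π} √( x + 𝖨 + 2·√(x𝖨)·cos θ ) dθ − √𝖨 ) = x/4. Equivalently, (1/(2π)) ∫₀^{2π} √( x + 𝖨 + 2·√(x𝖨)·cos θ ) dθ = √𝖨 + x/(4√𝖨) + O(1/𝖨) as 𝖨 → ∞. -/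
open Real Filter Topology

/-!
Write `s = √x`, `t = √I`, and let `R = √(s² + t² + 2 s t cos θ) = |t + s e^{iθ}|`. With
`A = t + s cos θ` and `B = s sin θ` one has `R² = A² + B²`, so `R - A = B² / (R + A)`, and
`R + A = 2 t + O(s)` gives `t (R - t - s cos θ) = s² sin² θ / 2 + O(1/t)` uniformly in `θ`
(`pointwise_bound`). Averaging over `θ`, the cosine term vanishes and `sin² θ` contributes `1/2`
(`average_bound`), so the limit is `s² / 4 = x / 4`.
-/

lemma pointwise_bound {s t : ℝ} (hs : 0 ≤ s) (hst : s < t) (θ : ℝ) :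
    |t * (√(s ^ 2 + t ^ 2 + 2 * (s * t) * cos θ) - t - s * cos θ) - s ^ 2 / 2 * sin θ ^ 2|
      ≤ s ^ 3 / (2 * (t - s)) := by
  have h1 := sin_sq_add_cos_sq θ
  have hc1 := neg_one_le_cos θ
  have hc2 := cos_le_one θ
  set c := cos θ
  set R := √(s ^ 2 + t ^ 2 + 2 * (s * t) * c) with hR
  have ht : 0 < t := hs.trans_lt hst
  have hst0 : 0 ≤ s * t := by positivity
  have hRl : t - s ≤ R := Real.le_sqrt_of_sq_le (by nlinarith)
  have hRu : R ≤ t + s := Real.sqrt_le_iff.2 ⟨by linarith, by nlinarith⟩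
  have hRsq : R ^ 2 = s ^ 2 + t ^ 2 + 2 * (s * t) * c :=
    Real.sq_sqrt (by nlinarith [sq_nonneg (t - s)])
  have hcl : -s ≤ s * c := by nlinarith
  have hcu : s * c ≤ s := by nlinarith
  have hd : 0 < t - s := by linarith
  have hprod : (R - (t + s * c)) * (R + (t + s * c)) = s ^ 2 * sin θ ^ 2 := by
    linear_combination hRsq - s ^ 2 * h1
  have hu0 : 0 ≤ R - (t + s * c) := by
    by_contra! h
    have : 0 ≤ s ^ 2 * sin θ ^ 2 := by positivity
    nlinarith
  have hu1 : R - (t + s * c) ≤ s ^ 2 / (2 * (t - s)) := by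
    rw [le_div_iff₀ (by linarith)]
    have h2 : s ^ 2 * sin θ ^ 2 ≤ s ^ 2 := by nlinarith [sq_nonneg (s * c)]
    nlinarith
  have hw : |(2 * t - R - (t + s * c)) / 2| ≤ s := by
    rw [abs_le]; constructor <;> linarith
  have key : t * (R - t - s * c) - s ^ 2 / 2 * sin θ ^ 2
      = (R - (t + s * c)) * ((2 * t - R - (t + s * c)) / 2) := by
    linear_combination hprod / 2
  rw [key, abs_mul, abs_of_nonneg hu0]
  calc _ ≤ s ^ 2 / (2 * (t - s)) * s := by gcongr
    _ = _ := by ring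

lemma average_bound {s t : ℝ} (hs : 0 ≤ s) (hst : s < t) :
    |t * (1 / (2 * π) * (∫ θ in (0:ℝ)..(2 * π), √(s ^ 2 + t ^ 2 + 2 * (s * t) * cos θ)) - t)
      - s ^ 2 / 4| ≤ s ^ 3 / (2 * (t - s)) := by
  have hb := intervalIntegral.norm_integral_le_of_norm_le_const (a := 0) (b := 2 * π)
    (f := fun θ => t * (√(s ^ 2 + t ^ 2 + 2 * (s * t) * cos θ) - t - s * cos θ)
      - s ^ 2 / 2 * sin θ ^ 2)
    (fun θ _ => pointwise_bound hs hst θ)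
  have hi : ∀ f : ℝ → ℝ, Continuous f → IntervalIntegrable f MeasureTheory.volume 0 (2 * π) :=
    fun f hf => hf.intervalIntegrable _ _
  rw [intervalIntegral.integral_sub (hi _ (by fun_prop)) (hi _ (by fun_prop)),
    intervalIntegral.integral_const_mul, intervalIntegral.integral_const_mul,
    intervalIntegral.integral_sub (hi _ (by fun_prop)) (hi _ (by fun_prop)),
    intervalIntegral.integral_sub (hi _ (by fun_prop)) (hi _ (by fun_prop)),
    intervalIntegral.integral_const_mul, integral_cos, integral_sin_sq,
    intervalIntegral.integral_const] at hb
  simp only [sin_two_pi, sin_zero, cos_zero, smul_eq_mul, sub_zero, mul_zero, zero_mul,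
    Real.norm_eq_abs, zero_add, abs_of_pos two_pi_pos] at hb
  set J := ∫ θ in (0:ℝ)..(2 * π), √(s ^ 2 + t ^ 2 + 2 * (s * t) * cos θ)
  have hp := two_pi_pos
  have hp0 := pi_ne_zero
  refine le_of_mul_le_mul_right ?_ hp
  calc _ = |(t * (1 / (2 * π) * J - t) - s ^ 2 / 4) * (2 * π)| := by
        rw [abs_mul, abs_of_pos hp]
    _ = |t * (J - 2 * π * t) - s ^ 2 / 2 * (2 * π / 2)| := by
        congr 1; field_simp; ring
    _ ≤ _ := hb

theorem stmt_17 (x : ℝ) (hx : 0 ≤ x) :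
    Tendsto (fun I : ℝ =>
        Real.sqrt I * ((1 / (2 * π)) * (∫ θ in (0:ℝ)..(2 * π),
          Real.sqrt (x + I + 2 * Real.sqrt (x * I) * Real.cos θ)) - Real.sqrt I))
      atTop (𝓝 (x / 4)) := by
  have hlim : Tendsto (fun I : ℝ => √x ^ 3 / (2 * (√I - √x))) atTop (𝓝 0) :=
    ((tendsto_atTop_add_const_right _ (-√x) Real.tendsto_sqrt_atTop).const_mul_atTop
      two_pos).const_div_atTop _
  rw [tendsto_iff_norm_sub_tendsto_zero]
  refine squeeze_zero' (Eventually.of_forall fun _ => norm_nonneg _) ?_ hlim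
  filter_upwards [eventually_gt_atTop x] with I hI
  have h := average_bound (Real.sqrt_nonneg x) (Real.sqrt_lt_sqrt hx hI)
  rw [Real.sq_sqrt hx, Real.sq_sqrt (hx.trans hI.le), ← Real.sqrt_mul hx] at h
  exact h
end

section
/- Logarithmic moment asymptotic: let F be a probability measure on [0,∞) with finite mean ∫₀^∞ x dF(x) < ∞. Then lim_{𝖨 → ∞} [ ∫₀^∞ (1/(2π)) ∫₀^{2π} ln( x + 𝖨 + 2·√(x𝖨)·cos θ ) dθ dF(x) − ln 𝖨 ] = 0. -/
/-!
For `x ≥ 0` and `I > 0` the logarithm is `2 * log ‖√I * exp (iθ) + √x‖`, so Jensen's formula for the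
linear function `z ↦ z + √x` on the circle of radius `√I` evaluates the angular average as
`log I + log⁺ (x / I)` (`angular_average_eq`). Since `0 ≤ log⁺ (x / I) ≤ x / I`, after subtracting
`log I` the outer integral lies between `0` and `(∫ x ∂F) / I`, which tends to `0`.
-/

open MeasureTheory Real Filter Topology

lemma log_eq_two_mul_log_norm_circleMap {x I : ℝ} (hx : 0 ≤ x) (hI : 0 < I) (θ : ℝ) :
    Real.log (x + I + 2 * Real.sqrt (x * I) * Real.cos θ)
      = 2 * Real.log ‖circleMap 0 (√I) θ - (-(√x : ℂ))‖ := by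
  have h : x + I + 2 * Real.sqrt (x * I) * Real.cos θ
      = ‖circleMap 0 (√I) θ - (-(√x : ℂ))‖ ^ 2 := by
    rw [← Complex.normSq_eq_norm_sq, Complex.normSq_apply, Real.sqrt_mul hx]
    simp only [circleMap, Complex.exp_mul_I, ← Complex.ofReal_cos, ← Complex.ofReal_sin]
    simp [-Complex.ofReal_cos, -Complex.ofReal_sin]
    linear_combination (-1 : ℝ) * Real.sq_sqrt hx - Real.sq_sqrt hI.le
      - (√I) ^ 2 * Real.sin_sq_add_cos_sq θ
  rw [h, Real.log_pow]
  norm_num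

/-- Jensen's formula for a linear function, in real form. -/
lemma angular_average_eq {x I : ℝ} (hx : 0 ≤ x) (hI : 0 < I) :
    (1 / (2 * π)) * ∫ θ in (0:ℝ)..(2 * π),
        Real.log (x + I + 2 * Real.sqrt (x * I) * Real.cos θ)
      = Real.log I + Real.posLog (x / I) := by
  have hsI : √I ≠ 0 := (Real.sqrt_pos.2 hI).ne'
  have key := circleAverage_log_norm_sub_const_eq_log_radius_add_posLog
    (a := -(√x : ℂ)) (c := 0) hsI
  rw [circleAverage_def, smul_eq_mul] at key
  simp_rw [log_eq_two_mul_log_norm_circleMap hx hI]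
  rw [intervalIntegral.integral_const_mul, one_div, mul_left_comm, key]
  have hn : (√I)⁻¹ * ‖(0 : ℂ) - -(√x : ℂ)‖ = √(x / I) := by
    rw [Real.sqrt_div hx]
    simp [abs_of_nonneg (Real.sqrt_nonneg x)]
    ring
  have hp : 2 * Real.posLog (√(x / I)) = Real.posLog (x / I) := by
    have h := Real.posLog_pow 2 (√(x / I))
    rw [Real.sq_sqrt (by positivity)] at h
    exact_mod_cast h.symm
  rw [hn, mul_add, hp, Real.log_sqrt hI.le]
  ring

lemma posLog_le_self {y : ℝ} (hy : 0 ≤ y) : Real.posLog y ≤ y :=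
  max_le hy (Real.log_le_self hy)

theorem stmt_19 (F : Measure ℝ) [IsProbabilityMeasure F] (hsupp : F (Set.Iio 0) = 0)
    (hmean : Integrable (fun x : ℝ => x) F) :
    Tendsto (fun I : ℝ =>
        (∫ x, ((1 / (2 * π)) * ∫ θ in (0:ℝ)..(2 * π),
          Real.log (x + I + 2 * Real.sqrt (x * I) * Real.cos θ)) ∂F) - Real.log I)
      atTop (𝓝 0) := by
  have hnn : ∀ᵐ x ∂F, 0 ≤ x := by
    rw [ae_iff]
    simpa [Set.Iio] using hsupp
  have hlim : Tendsto (fun I : ℝ => (∫ x, x ∂F) / I) atTop (𝓝 0) :=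
    tendsto_const_nhds.div_atTop tendsto_id
  have hint : ∀ I : ℝ, 0 < I → Integrable (fun x => Real.posLog (x / I)) F := by
    intro I hI
    refine (hmean.div_const I).mono' ?_ ?_
    · have : Measurable fun x : ℝ => max 0 (Real.log (x / I)) := by fun_prop
      exact this.aestronglyMeasurable
    · filter_upwards [hnn] with x hx
      rw [Real.norm_of_nonneg Real.posLog_nonneg]
      exact posLog_le_self (by positivity)
  have heq : ∀ I : ℝ, 0 < I →
      (∫ x, ((1 / (2 * π)) * ∫ θ in (0:ℝ)..(2 * π),
          Real.log (x + I + 2 * Real.sqrt (x * I) * Real.cos θ)) ∂F) - Real.log I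
        = ∫ x, Real.posLog (x / I) ∂F := by
    intro I hI
    rw [integral_congr_ae (hnn.mono fun x hx => angular_average_eq hx hI),
      integral_add (integrable_const _) (hint I hI)]
    simp
  refine tendsto_of_tendsto_of_tendsto_of_le_of_le' tendsto_const_nhds hlim ?_ ?_
  · filter_upwards [eventually_gt_atTop 0] with I hI
    rw [heq I hI]
    exact integral_nonneg fun x => Real.posLog_nonneg
  · filter_upwards [eventually_gt_atTop 0] with I hI
    rw [heq I hI, ← integral_div]
    refine integral_mono_ae (hint I hI) (hmean.div_const I) ?_
    filter_upwards [hnn] with x hx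
    exact posLog_le_self (by positivity)
end
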